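/- Let $A$ be a unique factorization domain and let $I$ be an ideal of $A$ that is not contained in any prime ideal of $A$ of height $1$. Then for every nonzero element $f \in A$ there exists $g \in I$ such that $f$ and $g$ are relatively prime. -/

import Mathlib

/-- A prime ideal `P` of `A` has height one if its height, as an element of the
prime spectrum of `A`, equals `1`. -/
def Ideal.HeightOne {A : Type*} [CommRing A] (P : Ideal A) (hP : P.IsPrime) : Prop :=
  Order.height (⟨P, hP⟩ : PrimeSpectrum A) = 1

/-!
If `f` lies in only finitely many height one primes, prime avoidance gives an element `g` of `I`
outside all of them. When every nonunit divisor of `f` lies in a height one prime, a nonunit common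
divisor of `f` and `g` would put both into one of those primes. In a unique factorization domain
the height one primes containing `f ≠ 0` are the ideals generated by the prime factors of `f`.
-/

section PrimeAvoidance

variable {A : Type*} [CommRing A] {I : Ideal A} {f : A}

theorem exists_mem_forall_notMem_of_finite {S : Set (Ideal A)} (hS : S.Finite)
    (hprime : ∀ P ∈ S, P.IsPrime) (hI : ∀ P ∈ S, ¬ I ≤ P) : ∃ g ∈ I, ∀ P ∈ S, g ∉ P := by
  have hnot : ¬ (I : Set A) ⊆ ⋃ P ∈ S, (P : Set A) := by
    intro hsub
    obtain ⟨P, hP, hIP⟩ := (Ideal.subset_union_prime_finite hS (f := id) ⊥ ⊥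
      fun P hP _ _ => hprime P hP).1 hsub
    exact hI P hP hIP
  simpa only [Set.not_subset, Set.mem_iUnion₂, SetLike.mem_coe, exists_prop, not_exists,
    not_and] using hnot

theorem isRelPrime_of_forall_notMem {S : Set (Ideal A)} {g : A}
    (hcover : ∀ d, d ∣ f → ¬ IsUnit d → ∃ P ∈ S, d ∈ P) (hg : ∀ P ∈ S, g ∉ P) :
    IsRelPrime f g := by
  intro d hdf hdg
  by_contra hd
  obtain ⟨P, hP, hdP⟩ := hcover d hdf hd
  exact hg P hP (P.mem_of_dvd hdg hdP)

theorem exists_relPrime_of_not_le_height_one_prime_general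
    (hfinite : {P : Ideal A | (∃ hP : P.IsPrime, P.HeightOne hP) ∧ f ∈ P}.Finite)
    (hcover : ∀ d, d ∣ f → ¬ IsUnit d → ∃ (P : Ideal A) (hP : P.IsPrime), P.HeightOne hP ∧ d ∈ P)
    (hI : ∀ (P : Ideal A) (hP : P.IsPrime), P.HeightOne hP → ¬ I ≤ P) :
    ∃ g ∈ I, IsRelPrime f g := by
  obtain ⟨g, hgI, hg⟩ := exists_mem_forall_notMem_of_finite hfinite
    (fun _ ⟨⟨hP, _⟩, _⟩ => hP) (fun P ⟨⟨hP, hP1⟩, _⟩ => hI P hP hP1)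
  refine ⟨g, hgI, isRelPrime_of_forall_notMem (fun d hdf hd => ?_) hg⟩
  obtain ⟨P, hP, hP1, hdP⟩ := hcover d hdf hd
  exact ⟨P, ⟨⟨hP, hP1⟩, P.mem_of_dvd hdf hdP⟩, hdP⟩

end PrimeAvoidance

section HeightOne

open UniqueFactorizationMonoid

theorem exists_mem_factors_mem_of_isPrime {A : Type*} [CommSemiring A]
    [UniqueFactorizationMonoid A] {f : A} (hf : f ≠ 0) {P : Ideal A} (hP : P.IsPrime)
    (hfP : f ∈ P) : ∃ p ∈ factors f, p ∈ P :=
  (hP.multiset_prod_mem_iff_exists_mem _).1 (P.mem_of_dvd (factors_prod hf).symm.dvd hfP)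

variable {A : Type*} [CommRing A]

theorem heightOne_iff_height_eq_one {P : Ideal A} (hP : P.IsPrime) :
    P.HeightOne hP ↔ P.height = 1 := by
  rw [Ideal.HeightOne, ← PrimeSpectrum.height_eq_orderHeight]

variable [IsDomain A]

theorem eq_bot_of_lt_span_singleton_prime [WfDvdMonoid A] {p : A} (hp : Prime p) {Q : Ideal A}
    (hQ : Q.IsPrime) (hlt : Q < Ideal.span {p}) : Q = ⊥ := by
  have hpQ : p ∉ Q := fun h => hlt.not_ge ((Ideal.span_singleton_le_iff_mem Q).2 h)
  refine (Submodule.eq_bot_iff Q).2 fun x hx => ?_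
  by_contra hx0
  obtain ⟨n, y, hpy, rfl⟩ := WfDvdMonoid.max_power_factor hx0 hp.irreducible
  have hyQ : y ∈ Q := (hQ.mem_or_mem hx).resolve_left (mt (hQ.mem_of_pow_mem n) hpQ)
  exact hpy (Ideal.mem_span_singleton.1 (hlt.le hyQ))

theorem height_span_singleton_prime [WfDvdMonoid A] {p : A} (hp : Prime p) :
    (Ideal.span {p}).height = 1 := by
  have : (Ideal.span {p}).IsPrime := (Ideal.span_singleton_prime hp.ne_zero).2 hp
  apply le_antisymm
  · refine (Ideal.height_le_iff (n := 1)).2 fun Q hQ hlt => ?_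
    simp [eq_bot_of_lt_span_singleton_prime hp hQ hlt]
  · exact Ideal.one_le_height_span_singleton_of_mem_nonZeroDivisors
      (mem_nonZeroDivisors_of_ne_zero hp.ne_zero)

variable [UniqueFactorizationMonoid A]

theorem exists_heightOne_mem_of_not_isUnit {d : A} (hd0 : d ≠ 0) (hd : ¬ IsUnit d) :
    ∃ (P : Ideal A) (hP : P.IsPrime), P.HeightOne hP ∧ d ∈ P := by
  obtain ⟨p, hp, hpd⟩ := WfDvdMonoid.exists_irreducible_factor hd hd0
  exact ⟨Ideal.span {p}, (Ideal.span_singleton_prime hp.ne_zero).2 hp.prime,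
    (heightOne_iff_height_eq_one _).2 (height_span_singleton_prime hp.prime),
    Ideal.mem_span_singleton.2 hpd⟩

theorem finite_setOf_heightOne_mem {f : A} (hf : f ≠ 0) :
    {P : Ideal A | (∃ hP : P.IsPrime, P.HeightOne hP) ∧ f ∈ P}.Finite := by
  refine ((factors f).finite_toSet.image fun p => Ideal.span {p}).subset ?_
  rintro P ⟨⟨hP, hP1⟩, hfP⟩
  obtain ⟨p, hpf, hpP⟩ := exists_mem_factors_mem_of_isPrime hf hP hfP
  exact ⟨p, hpf, (Ideal.eq_span_singleton_of_height_eq_one ((heightOne_iff_height_eq_one hP).1 hP1)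
    hpP (prime_of_factor p hpf)).symm⟩

end HeightOne

/-- Let `A` be a UFD and `I` an ideal of `A` not contained in any height one prime ideal.
Then for every nonzero `f ∈ A` there exists `g ∈ I` such that `f` and `g` are
relatively prime. -/
theorem exists_relPrime_of_not_le_height_one_prime
    {A : Type*} [CommRing A] [IsDomain A] [UniqueFactorizationMonoid A]
    (I : Ideal A) (hI : ∀ (P : Ideal A) (hP : P.IsPrime), P.HeightOne hP → ¬ I ≤ P) :
    ∀ f : A, f ≠ 0 → ∃ g ∈ I, IsRelPrime f g :=
  fun _ hf => exists_relPrime_of_not_le_height_one_prime_general (finite_setOf_heightOne_mem hf)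
    (fun _ hdf => exists_heightOne_mem_of_not_isUnit (ne_zero_of_dvd_ne_zero hf hdf)) hI
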